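/- Let ψ : Ω → ℝ be an eigenvector of H with eigenvalue E, set E' := E + K, and assume Σ_{α∈Ω} ψ(α)² ≤ 1. Assume the classically allowed region Ū := {α ∈ Ω : 1/u(α) − E' < 0} is nonempty and fix ε ∈ (0,1); let S be the Agmon action defined from ε, u, E' as in the context, and let U := Ω \ Ū. Then ε·Σ_{α∈U} ψ(α)²·e^{2S(α)}·(1/u(α) − E') ≤ max_{α∈Ū} (E' − 1/u(α)). (The exponentially weighted mass of an eigenstate in the classically forbidden region is controlled by the depth of the deepest classical well.) -/

import Mathlib

open Matrix Finset

/-!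
Let `A = H + K` and let `W = 1 / u`, so that `A u = W u` with `u > 0`. Expanding
`⟨h v, A (h v)⟩` for a symmetric `A` gives `⟨h² v, A v⟩` plus a Dirichlet form of `h` weighted
by `v`. We use this identity twice. With `v = u` the Dirichlet form is nonnegative, since the
off-diagonal entries of `A` are nonpositive; hence `∑ W φ² ≤ ⟨φ, A φ⟩` for every `φ`. With
`v = ψ` and `h = exp S` it evaluates `⟨φ, A φ⟩` at `φ = exp S • ψ`, and together these give
`∑ (W - E') exp (2S) ψ² ≤ 𝓔`, where `𝓔` is the Dirichlet form of `exp S` weighted by `ψ`.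
The Agmon weights are tuned so that `S`, being a distance function, satisfies
`𝓔 ≤ (1 - ε) ∑ (W - E')⁺ exp (2S) ψ²`. Rearranging leaves `ε` times the mass in the forbidden
region on the left and the mass in the allowed region, where `S = 0`, on the right.
-/

section DirichletForm

variable {Ω : Type*} [Fintype Ω] {A : Matrix Ω Ω ℝ}

/-- The Dirichlet form of `h` whose conductances `-A α β * v α * v β` are the off-diagonal entries
of `A`, up to sign, weighted by `v`. The diagonal of `A` does not contribute. It is the error term
when the multiplication operator `h` is commuted past `A`. -/
noncomputable def dirichletForm (A : Matrix Ω Ω ℝ) (v h : Ω → ℝ) : ℝ :=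
  1 / 2 * ∑ α, ∑ β, -A α β * (v α * v β) * (h α - h β) ^ 2

theorem dotProduct_mulVec_mul_eq_add_dirichletForm (hA : A.IsSymm) (v h : Ω → ℝ) :
    (h * v) ⬝ᵥ A *ᵥ (h * v) = (h ^ 2 * v) ⬝ᵥ A *ᵥ v + dirichletForm A v h := by
  have sum_swap : ∑ α, ∑ β, A α β * (v α * v β) * h β ^ 2 =
      ∑ α, ∑ β, A α β * (v α * v β) * h α ^ 2 := by
    rw [sum_comm]
    refine sum_congr rfl fun α _ => sum_congr rfl fun β _ => ?_
    rw [hA.apply α β]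
    ring
  have expand_left : (h * v) ⬝ᵥ A *ᵥ (h * v) =
      ∑ α, ∑ β, A α β * (v α * v β) * (h α * h β) := by
    simp only [dotProduct, mulVec, mul_sum, Pi.mul_apply]
    exact sum_congr rfl fun α _ => sum_congr rfl fun β _ => by ring
  have expand_right : (h ^ 2 * v) ⬝ᵥ A *ᵥ v = ∑ α, ∑ β, A α β * (v α * v β) * h α ^ 2 := by
    simp only [dotProduct, mulVec, mul_sum, Pi.mul_apply, Pi.pow_apply]
    exact sum_congr rfl fun α _ => sum_congr rfl fun β _ => by ring
  have expand_form : dirichletForm A v h =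
      ∑ α, ∑ β, A α β * (v α * v β) * (h α * h β)
        - 1 / 2 * (∑ α, ∑ β, A α β * (v α * v β) * h α ^ 2
          + ∑ α, ∑ β, A α β * (v α * v β) * h β ^ 2) := by
    simp only [dirichletForm, mul_sum, ← sum_add_distrib, ← sum_sub_distrib]
    exact sum_congr rfl fun α _ => sum_congr rfl fun β _ => by ring
  rw [expand_left, expand_right, expand_form, sum_swap]
  ring

theorem dirichletForm_nonneg (hoff : Pairwise fun α β => A α β ≤ 0) {v : Ω → ℝ}
    (hv : ∀ α, 0 ≤ v α) (h : Ω → ℝ) : 0 ≤ dirichletForm A v h := by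
  refine mul_nonneg (by norm_num) (sum_nonneg fun α _ => sum_nonneg fun β _ => ?_)
  rcases eq_or_ne α β with rfl | hne
  · simp
  · have := neg_nonneg.2 (hoff hne)
    have := mul_nonneg (hv α) (hv β)
    positivity

theorem dirichletForm_le (hA : A.IsSymm) (hoff : Pairwise fun α β => A α β ≤ 0) (v h : Ω → ℝ) :
    dirichletForm A v h ≤ 1 / 2 * ∑ α, ∑ β, -A α β * v α ^ 2 * (h α - h β) ^ 2 := by
  have sum_swap : ∑ α, ∑ β, -A α β * v β ^ 2 * (h α - h β) ^ 2 =
      ∑ α, ∑ β, -A α β * v α ^ 2 * (h α - h β) ^ 2 := by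
    rw [sum_comm]
    refine sum_congr rfl fun α _ => sum_congr rfl fun β _ => ?_
    rw [hA.apply α β]
    ring
  have am_gm : ∀ α β, -A α β * (v α * v β) * (h α - h β) ^ 2 ≤
      1 / 2 * (-A α β * v α ^ 2 * (h α - h β) ^ 2 + -A α β * v β ^ 2 * (h α - h β) ^ 2) := by
    intro α β
    rcases eq_or_ne α β with rfl | hne
    · simp
    · have := neg_nonneg.2 (hoff hne)
      have : 0 ≤ -A α β * (v α - v β) ^ 2 * (h α - h β) ^ 2 := by positivity
      linarith
  calc dirichletForm A v h
      ≤ 1 / 2 * ∑ α, ∑ β, 1 / 2 * (-A α β * v α ^ 2 * (h α - h β) ^ 2 +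
          -A α β * v β ^ 2 * (h α - h β) ^ 2) := by
        unfold dirichletForm
        exact mul_le_mul_of_nonneg_left
          (sum_le_sum fun α _ => sum_le_sum fun β _ => am_gm α β) (by norm_num)
    _ = 1 / 2 * ∑ α, ∑ β, -A α β * v α ^ 2 * (h α - h β) ^ 2 := by
        simp only [← mul_sum, sum_add_distrib, sum_swap]
        ring

theorem dirichletForm_le_of_sq_sub_le [DecidableEq Ω] (hA : A.IsSymm)
    (hoff : Pairwise fun α β => A α β ≤ 0) (v : Ω → ℝ) {h c : Ω → ℝ}
    (hc : ∀ α β, α ≠ β → A α β ≠ 0 → (h α - h β) ^ 2 ≤ c α) :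
    dirichletForm A v h ≤ 1 / 2 * ∑ α, v α ^ 2 * ((∑ β ∈ univ.erase α, -A α β) * c α) := by
  refine (dirichletForm_le hA hoff v h).trans ?_
  gcongr with α
  have diag_eq_zero : -A α α * v α ^ 2 * (h α - h α) ^ 2 = 0 := by simp
  rw [← sum_erase (f := fun β => -A α β * v α ^ 2 * (h α - h β) ^ 2) univ diag_eq_zero,
    sum_mul, mul_sum]
  refine sum_le_sum fun β hβ => ?_
  have hne : α ≠ β := (ne_of_mem_erase hβ).symm
  by_cases hAβ : A α β = 0
  · simp [hAβ]
  · have := neg_nonneg.2 (hoff hne)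
    calc -A α β * v α ^ 2 * (h α - h β) ^ 2
        ≤ -A α β * v α ^ 2 * c α := by gcongr; exact hc α β hne hAβ
      _ = v α ^ 2 * (-A α β * c α) := by ring

end DirichletForm

section AgmonEstimate

variable {Ω : Type*} [Fintype Ω] {A : Matrix Ω Ω ℝ} {u W ψ : Ω → ℝ} {E : ℝ}

theorem sum_mul_sq_le_dotProduct_mulVec (hA : A.IsSymm) (hoff : Pairwise fun α β => A α β ≤ 0)
    (hu : ∀ α, 0 < u α) (hW : A *ᵥ u = W * u) (φ : Ω → ℝ) :
    ∑ α, W α * φ α ^ 2 ≤ φ ⬝ᵥ A *ᵥ φ := by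
  have div_mul_u : φ / u * u = φ := funext fun α => div_mul_cancel₀ _ (hu α).ne'
  have ims := dotProduct_mulVec_mul_eq_add_dirichletForm hA u (φ / u)
  have potential_term : ((φ / u) ^ 2 * u) ⬝ᵥ A *ᵥ u = ∑ α, W α * φ α ^ 2 := by
    rw [hW]
    refine sum_congr rfl fun α _ => ?_
    have := (hu α).ne'
    simp only [Pi.mul_apply, Pi.pow_apply, Pi.div_apply]
    field_simp
  rw [div_mul_u, potential_term] at ims
  linarith [dirichletForm_nonneg hoff (fun α => (hu α).le) (φ / u)]

theorem sum_sq_mul_sub_le_dirichletForm (hA : A.IsSymm) (hoff : Pairwise fun α β => A α β ≤ 0)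
    (hu : ∀ α, 0 < u α) (hW : A *ᵥ u = W * u) (hψ : A *ᵥ ψ = E • ψ) (g : Ω → ℝ) :
    ∑ α, ψ α ^ 2 * g α ^ 2 * (W α - E) ≤ dirichletForm A ψ g := by
  have eigen_term : (g ^ 2 * ψ) ⬝ᵥ A *ᵥ ψ = ∑ α, E * (ψ α ^ 2 * g α ^ 2) := by
    rw [hψ]
    refine sum_congr rfl fun α _ => ?_
    simp only [Pi.mul_apply, Pi.pow_apply, Pi.smul_apply, smul_eq_mul]
    ring
  calc ∑ α, ψ α ^ 2 * g α ^ 2 * (W α - E)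
      = ∑ α, W α * (g * ψ) α ^ 2 - ∑ α, E * (ψ α ^ 2 * g α ^ 2) := by
        rw [← sum_sub_distrib]
        exact sum_congr rfl fun α _ => by rw [Pi.mul_apply]; ring
    _ ≤ (g * ψ) ⬝ᵥ A *ᵥ (g * ψ) - ∑ α, E * (ψ α ^ 2 * g α ^ 2) := by
        gcongr
        exact sum_mul_sq_le_dotProduct_mulVec hA hoff hu hW _
    _ = dirichletForm A ψ g := by
        rw [dotProduct_mulVec_mul_eq_add_dirichletForm hA, eigen_term, add_sub_cancel_left]

theorem dirichletForm_le_sum_posPart [DecidableEq Ω] (hA : A.IsSymm)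
    (hoff : Pairwise fun α β => A α β ≤ 0) {d : Ω → ℝ}
    (hd : ∀ α, d α = ∑ β ∈ univ.erase α, -A α β) {ε : ℝ} (hε : ε ≤ 1) {g : Ω → ℝ} (ψ : Ω → ℝ)
    (hg : ∀ α β, α ≠ β → A α β ≠ 0 →
      (g α - g β) ^ 2 ≤ g α ^ 2 * (2 * (1 - ε) / d α * max (W α - E) 0)) :
    dirichletForm A ψ g ≤ (1 - ε) * ∑ α, ψ α ^ 2 * g α ^ 2 * max (W α - E) 0 := by
  refine (dirichletForm_le_of_sq_sub_le hA hoff ψ hg).trans ?_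
  rw [mul_sum, mul_sum]
  refine sum_le_sum fun α _ => ?_
  have : 0 ≤ 1 - ε := sub_nonneg.2 hε
  calc 1 / 2 * (ψ α ^ 2 * ((∑ β ∈ univ.erase α, -A α β) *
          (g α ^ 2 * (2 * (1 - ε) / d α * max (W α - E) 0))))
      = (1 - ε) * (ψ α ^ 2 * g α ^ 2 * max (W α - E) 0) * (d α / d α) := by rw [← hd]; ring
    _ ≤ (1 - ε) * (ψ α ^ 2 * g α ^ 2 * max (W α - E) 0) :=
        mul_le_of_le_one_right (by positivity) (div_self_le_one _)

theorem mul_sum_compl_le_of_sum_le_sum_posPart [DecidableEq Ω] {s : Finset Ω} {m y : Ω → ℝ}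
    {ε : ℝ} (hs : ∀ α, α ∈ s ↔ y α < 0)
    (hle : ∑ α, m α * y α ≤ (1 - ε) * ∑ α, m α * max (y α) 0) :
    ε * ∑ α ∈ sᶜ, m α * y α ≤ ∑ α ∈ s, m α * -y α := by
  have sum_posPart : ∑ α, m α * max (y α) 0 = ∑ α ∈ sᶜ, m α * y α := by
    rw [← sum_add_sum_compl s, sum_eq_zero, zero_add]
    · refine sum_congr rfl fun α hα => ?_
      rw [max_eq_left (not_lt.1 fun h => mem_compl.1 hα ((hs α).2 h))]
    · intro α hα
      rw [max_eq_right ((hs α).1 hα).le, mul_zero]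
  rw [sum_posPart, ← sum_add_sum_compl s] at hle
  simp only [mul_neg, sum_neg_distrib]
  linarith

theorem sum_mul_le_sup'_of_sum_le_one {ι : Type*} {s : Finset ι} (hs : s.Nonempty) {m f : ι → ℝ}
    (hm : ∀ i ∈ s, 0 ≤ m i) (hm1 : ∑ i ∈ s, m i ≤ 1) (hf : ∃ i ∈ s, 0 ≤ f i) :
    ∑ i ∈ s, m i * f i ≤ s.sup' hs f := by
  obtain ⟨i₀, hi₀, hfi₀⟩ := hf
  have sup_nonneg : 0 ≤ s.sup' hs f := hfi₀.trans (le_sup' f hi₀)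
  calc ∑ i ∈ s, m i * f i
      ≤ ∑ i ∈ s, m i * s.sup' hs f :=
        sum_le_sum fun i hi => mul_le_mul_of_nonneg_left (le_sup' f hi) (hm i hi)
    _ = (∑ i ∈ s, m i) * s.sup' hs f := (sum_mul ..).symm
    _ ≤ s.sup' hs f := mul_le_of_le_one_left sup_nonneg hm1

end AgmonEstimate

section WalkDistance

variable {Ω : Type*} {G : SimpleGraph Ω} {w : Ω → Ω → ℝ} {s : Set Ω} {α β : Ω}

/-- The distance from the set `s` to `α` in `G` when an edge traversed from `x` to `y` has
length `w x y`: with the Agmon weights and the allowed region for `s`, this is the Agmon action.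
The infimum is `0` by convention if `α` cannot be reached from `s`. -/
noncomputable def walkDist (G : SimpleGraph Ω) (w : Ω → Ω → ℝ) (s : Set Ω) (α : Ω) : ℝ :=
  sInf {l : ℝ | ∃ x ∈ s, ∃ p : G.Walk x α, l = (p.darts.map fun d => w d.toProd.1 d.toProd.2).sum}

theorem sum_map_darts_nonneg (hw : ∀ x y, 0 ≤ w x y) {x : Ω} (p : G.Walk x α) :
    0 ≤ (p.darts.map fun d => w d.toProd.1 d.toProd.2).sum :=
  List.sum_nonneg (List.forall_mem_map.2 fun _ _ => hw _ _)

theorem walkDist_le (hw : ∀ x y, 0 ≤ w x y) {x : Ω} (hx : x ∈ s) (p : G.Walk x α) :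
    walkDist G w s α ≤ (p.darts.map fun d => w d.toProd.1 d.toProd.2).sum := by
  refine csInf_le ⟨0, ?_⟩ ⟨x, hx, p, rfl⟩
  rintro _ ⟨y, -, q, rfl⟩
  exact sum_map_darts_nonneg hw q

theorem walkDist_eq_zero_of_mem (hw : ∀ x y, 0 ≤ w x y) (hα : α ∈ s) : walkDist G w s α = 0 := by
  refine le_antisymm ((walkDist_le hw hα SimpleGraph.Walk.nil).trans_eq (by simp)) ?_
  refine Real.sInf_nonneg ?_
  rintro _ ⟨y, -, q, rfl⟩
  exact sum_map_darts_nonneg hw q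

theorem walkDist_le_add_of_adj (hw : ∀ x y, 0 ≤ w x y) (hα : ∃ x ∈ s, G.Reachable x α)
    (hαβ : G.Adj α β) : walkDist G w s β ≤ walkDist G w s α + w α β := by
  rw [← sub_le_iff_le_add]
  obtain ⟨x₀, hx₀, ⟨p₀⟩⟩ := hα
  refine le_csInf ⟨_, x₀, hx₀, p₀, rfl⟩ ?_
  rintro _ ⟨x, hx, p, rfl⟩
  have concat_bound := walkDist_le hw hx (p.concat hαβ)
  simp only [SimpleGraph.Walk.darts_concat, List.concat_eq_append, List.map_append, List.sum_append,
    List.map_singleton, List.sum_singleton] at concat_bound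
  linarith

theorem abs_walkDist_sub_le_of_adj (hw : ∀ x y, 0 ≤ w x y) (hsymm : ∀ x y, w x y = w y x)
    (hα : ∃ x ∈ s, G.Reachable x α) (hαβ : G.Adj α β) :
    |walkDist G w s α - walkDist G w s β| ≤ w α β := by
  have hβ : ∃ x ∈ s, G.Reachable x β := hα.imp fun x hx => ⟨hx.1, hx.2.trans hαβ.reachable⟩
  rw [abs_sub_le_iff]
  constructor
  · linarith [walkDist_le_add_of_adj hw hβ hαβ.symm, hsymm α β]
  · linarith [walkDist_le_add_of_adj hw hα hαβ]

end WalkDistance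

theorem abs_exp_sub_exp_le {a b r : ℝ} (hr : 0 ≤ r) (hab : |a - b| ≤ Real.log (1 + r)) :
    |Real.exp a - Real.exp b| ≤ Real.exp a * r := by
  have exp_le : ∀ x y : ℝ, x - y ≤ Real.log (1 + r) → Real.exp x ≤ Real.exp y * (1 + r) := by
    intro x y hxy
    rw [← Real.exp_log (by linarith : 0 < 1 + r), ← Real.exp_add, Real.exp_le_exp]
    linarith
  obtain ⟨hab₁, hab₂⟩ := abs_sub_le_iff.1 hab
  rw [abs_sub_le_iff]
  refine ⟨?_, by linarith [exp_le b a hab₂]⟩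
  rcases le_total (Real.exp a) (Real.exp b) with h | h
  · linarith [mul_nonneg (Real.exp_pos a).le hr]
  · linarith [exp_le a b hab₁, mul_le_mul_of_nonneg_right h hr]

/-- The edge length for which `exp` of the distance has squared gradient at most `c` times its own
square: the smaller of the lengths `log (1 + √c)` prescribed at the two endpoints. The Agmon weights
are the case `c = 2 (1 - ε) (W - E)⁺ / d`. -/
noncomputable def agmonWeight {Ω : Type*} (c : Ω → ℝ) (α β : Ω) : ℝ :=
  min (Real.log (1 + √(c α))) (Real.log (1 + √(c β)))

section AgmonWeight

variable {Ω : Type*}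

theorem agmonWeight_nonneg (c : Ω → ℝ) (α β : Ω) : 0 ≤ agmonWeight c α β :=
  le_min (Real.log_nonneg (by linarith [Real.sqrt_nonneg (c α)]))
    (Real.log_nonneg (by linarith [Real.sqrt_nonneg (c β)]))

theorem agmonWeight_comm (c : Ω → ℝ) (α β : Ω) : agmonWeight c α β = agmonWeight c β α :=
  min_comm _ _

theorem sq_exp_walkDist_sub_le_of_adj {G : SimpleGraph Ω} {s : Set Ω} {c : Ω → ℝ} {α β : Ω}
    (hc : 0 ≤ c α) (hα : ∃ x ∈ s, G.Reachable x α) (hαβ : G.Adj α β) :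
    (Real.exp (walkDist G (agmonWeight c) s α) - Real.exp (walkDist G (agmonWeight c) s β)) ^ 2 ≤
      Real.exp (walkDist G (agmonWeight c) s α) ^ 2 * c α := by
  have lipschitz : |walkDist G (agmonWeight c) s α - walkDist G (agmonWeight c) s β| ≤
      Real.log (1 + √(c α)) :=
    (abs_walkDist_sub_le_of_adj (agmonWeight_nonneg c) (agmonWeight_comm c) hα hαβ).trans
      (min_le_left _ _)
  calc (Real.exp (walkDist G (agmonWeight c) s α) - Real.exp (walkDist G (agmonWeight c) s β)) ^ 2
      ≤ (Real.exp (walkDist G (agmonWeight c) s α) * √(c α)) ^ 2 :=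
        sq_le_sq.2 ((abs_exp_sub_exp_le (Real.sqrt_nonneg _) lipschitz).trans (le_abs_self _))
    _ = Real.exp (walkDist G (agmonWeight c) s α) ^ 2 * c α := by
        rw [mul_pow, Real.sq_sqrt hc]

end AgmonWeight

section HoppingMatrix

variable {Ω : Type*} [DecidableEq Ω] (G : SimpleGraph Ω) [DecidableRel G.Adj] (t : ℝ) (V : Ω → ℝ)

/-- The Hamiltonian on `G` with hopping amplitude `t` and on-site potential `V`. -/
def hoppingMatrix : Matrix Ω Ω ℝ :=
  diagonal V - t • G.adjMatrix ℝ

theorem hoppingMatrix_apply_of_ne {α β : Ω} (h : α ≠ β) :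
    hoppingMatrix G t V α β = if G.Adj α β then -t else 0 := by
  by_cases hadj : G.Adj α β <;> simp [hoppingMatrix, h, hadj]

theorem add_smul_one_eq_hoppingMatrix {H : Matrix Ω Ω ℝ} {t : ℝ} {V : Ω → ℝ} (K : ℝ)
    (hH : ∀ α β, H α β = if α = β then V α else if G.Adj α β then -t else 0) :
    H + K • 1 = hoppingMatrix G t (V + fun _ => K) := by
  ext α β
  rcases eq_or_ne α β with rfl | h
  · simp [hH, hoppingMatrix]
  · simp [hH, h, hoppingMatrix_apply_of_ne]

theorem isSymm_hoppingMatrix : (hoppingMatrix G t V).IsSymm :=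
  (isSymm_diagonal V).sub (G.isSymm_adjMatrix.smul t)

theorem pairwise_hoppingMatrix_nonpos {t : ℝ} (ht : 0 ≤ t) :
    Pairwise fun α β => hoppingMatrix G t V α β ≤ 0 := by
  intro α β h
  rw [hoppingMatrix_apply_of_ne G t V h]
  split_ifs <;> linarith

theorem adj_iff_hoppingMatrix_ne_zero {t : ℝ} (ht : t ≠ 0) (α β : Ω) :
    G.Adj α β ↔ α ≠ β ∧ hoppingMatrix G t V α β ≠ 0 := by
  rcases eq_or_ne α β with rfl | h
  · simp
  · simp [hoppingMatrix_apply_of_ne G t V h, h, ht]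

theorem mul_degree_eq_sum_neg_hoppingMatrix [Fintype Ω] (α : Ω) :
    t * G.degree α = ∑ β ∈ univ.erase α, -hoppingMatrix G t V α β := by
  have off_diag : ∀ β ∈ univ.erase α, -hoppingMatrix G t V α β = t * G.adjMatrix ℝ α β := by
    intro β hβ
    rw [hoppingMatrix_apply_of_ne G t V (ne_of_mem_erase hβ).symm, SimpleGraph.adjMatrix_apply]
    split_ifs <;> simp
  rw [sum_congr rfl off_diag, ← mul_sum, sum_erase univ (by simp)]
  simp [SimpleGraph.adjMatrix_apply, ← SimpleGraph.card_neighborFinset_eq_degree,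
    SimpleGraph.neighborFinset_eq_filter]

end HoppingMatrix

section Landscape

variable {n R : Type*} [Fintype n] [DecidableEq n]

theorem mulVec_inv_mulVec_of_ne_zero [CommRing R] {A : Matrix n n R} {v : n → R}
    (h : A⁻¹ *ᵥ v ≠ 0) : A *ᵥ A⁻¹ *ᵥ v = v := by
  have hdet : IsUnit A.det := by
    by_contra hsing
    exact h (by rw [nonsing_inv_apply_not_isUnit _ hsing, zero_mulVec])
  rw [mulVec_mulVec, mul_nonsing_inv _ hdet, one_mulVec]

theorem mulVec_landscape_eq_one_div_mul [Field R] {A : Matrix n n R} {u : n → R}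
    (hu : u = A⁻¹ *ᵥ fun _ => 1) (hne : ∀ i, u i ≠ 0) : A *ᵥ u = (fun i => 1 / u i) * u := by
  funext i
  have u_ne_zero : u ≠ 0 := fun h => hne i (congrFun h i)
  have landscape_eq : A *ᵥ u = fun _ => 1 := by
    rw [hu] at u_ne_zero ⊢
    exact mulVec_inv_mulVec_of_ne_zero u_ne_zero
  rw [landscape_eq, Pi.mul_apply, one_div_mul_cancel (hne i)]

theorem add_smul_one_mulVec_of_mulVec_eq_smul [CommRing R] {H : Matrix n n R} {ψ : n → R} {E : R}
    (hψ : H *ᵥ ψ = E • ψ) (K : R) : (H + K • 1) *ᵥ ψ = (E + K) • ψ := by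
  rw [add_mulVec, hψ, smul_mulVec, one_mulVec, add_smul]

end Landscape

theorem mbll_forbidden_region_mass_bound_general
    {Ω : Type*} [Fintype Ω] [DecidableEq Ω]
    {A : Matrix Ω Ω ℝ} (hA : A.IsSymm) (hoff : Pairwise fun α β => A α β ≤ 0)
    {G : SimpleGraph Ω} (hG : ∀ α β, G.Adj α β ↔ α ≠ β ∧ A α β ≠ 0)
    {d : Ω → ℝ} (hd : ∀ α, d α = ∑ β ∈ univ.erase α, -A α β)
    {u W : Ω → ℝ} (hu : ∀ α, 0 < u α) (hW : A *ᵥ u = W * u)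
    {ψ : Ω → ℝ} {E : ℝ} (hψ : A *ᵥ ψ = E • ψ) (hnorm : ∑ α, ψ α ^ 2 ≤ 1)
    {Ubar : Finset Ω} (hUbar : ∀ α, α ∈ Ubar ↔ W α - E < 0) (hUne : Ubar.Nonempty)
    (hreach : ∀ α, ∃ x ∈ Ubar, G.Reachable x α) {ε : ℝ} (hε : ε ≤ 1)
    {w : Ω → Ω → ℝ}
    (hw : ∀ α β, w α β = agmonWeight (fun k => 2 * (1 - ε) / d k * max (W k - E) 0) α β)
    {S : Ω → ℝ} (hS : ∀ α, S α = walkDist G w Ubar α) :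
    ε * ∑ α ∈ Ubarᶜ, ψ α ^ 2 * Real.exp (2 * S α) * (W α - E)
      ≤ Ubar.sup' hUne (fun α => E - W α) := by
  obtain rfl : w = agmonWeight _ := funext₂ hw
  have rate_nonneg : ∀ α, 0 ≤ d α := fun α =>
    hd α ▸ sum_nonneg fun β hβ => neg_nonneg.2 (hoff (ne_of_mem_erase hβ).symm)
  have : 0 ≤ 1 - ε := sub_nonneg.2 hε
  have gradient_bound : ∀ α β, α ≠ β → A α β ≠ 0 → (Real.exp (S α) - Real.exp (S β)) ^ 2 ≤
      Real.exp (S α) ^ 2 * (2 * (1 - ε) / d α * max (W α - E) 0) := by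
    intro α β hne hAβ
    have := rate_nonneg α
    rw [hS α, hS β]
    exact sq_exp_walkDist_sub_le_of_adj (by positivity) (hreach α) ((hG α β).2 ⟨hne, hAβ⟩)
  have forbidden_le_allowed := mul_sum_compl_le_of_sum_le_sum_posPart hUbar <|
    (sum_sq_mul_sub_le_dirichletForm hA hoff hu hW hψ fun α => Real.exp (S α)).trans
      (dirichletForm_le_sum_posPart hA hoff hd hε ψ gradient_bound)
  have exp_eq_one : ∀ α ∈ Ubar, Real.exp (S α) = 1 := fun α hα => by
    rw [hS, walkDist_eq_zero_of_mem (agmonWeight_nonneg _) (mem_coe.2 hα), Real.exp_zero]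
  calc ε * ∑ α ∈ Ubarᶜ, ψ α ^ 2 * Real.exp (2 * S α) * (W α - E)
      = ε * ∑ α ∈ Ubarᶜ, ψ α ^ 2 * Real.exp (S α) ^ 2 * (W α - E) := by
        simp only [← Real.exp_nat_mul, Nat.cast_ofNat]
    _ ≤ ∑ α ∈ Ubar, ψ α ^ 2 * Real.exp (S α) ^ 2 * -(W α - E) := forbidden_le_allowed
    _ = ∑ α ∈ Ubar, ψ α ^ 2 * (E - W α) :=
        sum_congr rfl fun α hα => by rw [exp_eq_one α hα]; ring
    _ ≤ Ubar.sup' hUne (fun α => E - W α) :=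
        sum_mul_le_sup'_of_sum_le_one hUne (fun α _ => sq_nonneg (ψ α))
          ((sum_le_univ_sum_of_nonneg fun α => sq_nonneg (ψ α)).trans hnorm)
          (hUne.imp fun α hα => ⟨hα, by linarith [(hUbar α).1 hα]⟩)

/-- The exponentially weighted mass of a (normalized) eigenstate in the classically
forbidden region `U = Ω \ Ū` is controlled by the depth of the deepest classical well:
`ε·Σ_{α ∈ U} ψ α² e^{2S α} (1/u α − E') ≤ max_{α ∈ Ū} (E' − 1/u α)`. -/
theorem mbll_forbidden_region_mass_bound
    {Ω : Type*} [Fintype Ω] [DecidableEq Ω] [Nonempty Ω]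
    (G : SimpleGraph Ω) [DecidableRel G.Adj] (hG : G.Connected)
    (t : ℝ) (ht : 0 < t) (V : Ω → ℝ) (K : ℝ)
    (H : Matrix Ω Ω ℝ)
    (hH : ∀ α β, H α β = if α = β then V α else if G.Adj α β then -t else 0)
    (hK : ∀ α, 0 ≤ K + V α - t * (G.degree α + 1))
    (u : Ω → ℝ) (hu : u = (H + K • (1 : Matrix Ω Ω ℝ))⁻¹ *ᵥ (fun _ => 1))
    (hupos : ∀ α, 0 < u α)
    (ψ : Ω → ℝ) (E : ℝ) (hψ : H *ᵥ ψ = E • ψ)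
    (hnorm : ∑ α, ψ α ^ 2 ≤ 1)
    (E' : ℝ) (hE' : E' = E + K)
    (Ubar : Finset Ω) (hUbar : ∀ α, α ∈ Ubar ↔ 1 / u α - E' < 0) (hUne : Ubar.Nonempty)
    (ε : ℝ) (hε0 : 0 < ε) (hε1 : ε < 1)
    (w : Ω → Ω → ℝ)
    (hw : ∀ α β, w α β =
      min (Real.log (1 + Real.sqrt (2 * (1 - ε) / (t * G.degree α) * max (1 / u α - E') 0)))
          (Real.log (1 + Real.sqrt (2 * (1 - ε) / (t * G.degree β) * max (1 / u β - E') 0))))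
    (S : Ω → ℝ)
    (hS : ∀ α, S α = sInf {s : ℝ | ∃ x ∈ Ubar, ∃ p : G.Walk x α,
      s = (p.darts.map fun d => w d.toProd.1 d.toProd.2).sum}) :
    ε * ∑ α ∈ Ubarᶜ, ψ α ^ 2 * Real.exp (2 * S α) * (1 / u α - E')
      ≤ Ubar.sup' hUne (fun α => E' - 1 / u α) := by
  have hA := add_smul_one_eq_hoppingMatrix G K hH
  exact mbll_forbidden_region_mass_bound_general (isSymm_hoppingMatrix G t _)
    (pairwise_hoppingMatrix_nonpos G _ ht.le) (adj_iff_hoppingMatrix_ne_zero G _ ht.ne')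
    (mul_degree_eq_sum_neg_hoppingMatrix G t _) hupos
    (mulVec_landscape_eq_one_div_mul (hA ▸ hu) fun α => (hupos α).ne')
    (hA ▸ hE' ▸ add_smul_one_mulVec_of_mulVec_eq_smul hψ K) hnorm hUbar hUne
    (fun α => hUne.imp fun x hx => ⟨hx, hG.preconnected x α⟩) hε1.le hw hS
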